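/- arXiv:2007.06896 — 2 statements merged into one kernel-verified Lean document; each statement's English description precedes it below -/
import Mathlib

section
/- For every k ∈ ℕ, every finite undirected graph G has at most 2^k inclusion-minimal vertex covers of size at most k. -/
/-- `S` is a vertex cover of the (undirected) graph `G`. -/
def IsVCover {V : Type*} (G : SimpleGraph V) (S : Set V) : Prop :=
  ∀ ⦃a b : V⦄, G.Adj a b → a ∈ S ∨ b ∈ S

/-!
A vertex cover is a hitting set of the family of edges, regarded as two-element sets. To enumerate
the minimal hitting sets that extend a set `T` by at most `k` points, pick an edge that `T` misses
and branch on which of its points is added: `k` drops by one, so the search tree has depth at most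
`k` and branching at most the edge size. A branch ends as soon as `T` is itself a hitting set,
because no minimal hitting set properly contains `T` then.
-/

theorem encard_biUnion_le_encard_mul {ι α : Type*} {s : Set ι} {f : ι → Set α} {c : ℕ∞}
    (hf : ∀ i ∈ s, (f i).encard ≤ c) : (⋃ i ∈ s, f i).encard ≤ s.encard * c := by
  rcases s.finite_or_infinite with hs | hs
  · induction s, hs using Set.Finite.induction_on with
    | empty => simp
    | @insert i s his _ ih =>
      rw [Set.forall_mem_insert] at hf
      calc (⋃ j ∈ insert i s, f j).encard
          ≤ (f i).encard + (⋃ j ∈ s, f j).encard := by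
            rw [Set.biUnion_insert]
            exact Set.encard_union_le _ _
        _ ≤ c + s.encard * c := add_le_add hf.1 (ih hf.2)
        _ = (insert i s).encard * c := by
            rw [Set.encard_insert_of_notMem his, add_one_mul, add_comm]
  · rcases eq_or_ne c 0 with rfl | hc
    · simpa using hf
    · simp [hs.encard_eq, ENat.top_mul hc]

theorem encard_sdiff_insert_add_one {α : Type*} {s t : Set α} {a : α} (has : a ∈ s) (hat : a ∉ t) :
    (s \ insert a t).encard + 1 = (s \ t).encard := by
  rw [← Set.union_singleton, ← Set.sdiff_sdiff,
    Set.encard_sdiff_singleton_add_one (Set.mem_sdiff_of_mem has hat)]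

section HittingSet

variable {V : Type*} {𝓔 : Set (Set V)} {T e : Set V} {d : ℕ∞} {k : ℕ}

/-- `S` is a hitting set (transversal) of the hypergraph with edge family `𝓔`: it meets every
member of `𝓔`. -/
def IsHittingSet (𝓔 : Set (Set V)) (S : Set V) : Prop :=
  ∀ e ∈ 𝓔, (e ∩ S).Nonempty

/-- The minimal hitting sets of `𝓔` that arise from `T` by adding at most `k` points: the ones
found below the node `T` of the search tree. Only the added points are counted, so `T` may be
infinite. -/
def minimalHittingExtensions (𝓔 : Set (Set V)) (T : Set V) (k : ℕ) : Set (Set V) :=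
  {S | Minimal (IsHittingSet 𝓔) S ∧ T ⊆ S ∧ (S \ T).encard ≤ k}

theorem minimalHittingExtensions_subset_singleton_of_isHittingSet (hT : IsHittingSet 𝓔 T) :
    minimalHittingExtensions 𝓔 T k ⊆ {T} :=
  fun _ ⟨hS, hTS, _⟩ ↦ (hS.eq_of_subset hT hTS).symm

theorem minimalHittingExtensions_zero_subset_singleton :
    minimalHittingExtensions 𝓔 T 0 ⊆ {T} := by
  rintro S ⟨-, hTS, hcard⟩
  have hST : S ⊆ T := by simpa [Set.sdiff_eq_empty] using hcard
  exact hST.antisymm hTS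

theorem minimalHittingExtensions_succ_subset_biUnion (he : e ∈ 𝓔) (heT : Disjoint e T) :
    minimalHittingExtensions 𝓔 T (k + 1) ⊆
      ⋃ a ∈ e, minimalHittingExtensions 𝓔 (insert a T) k := by
  rintro S ⟨hS, hTS, hcard⟩
  obtain ⟨a, hae, haS⟩ := hS.prop e he
  have hcard' : (S \ insert a T).encard ≤ k := by
    rw [← encard_sdiff_insert_add_one haS (heT.notMem_of_mem_left hae)] at hcard
    exact (ENat.add_le_add_iff_right ENat.one_ne_top).1 (by exact_mod_cast hcard)
  exact Set.mem_biUnion hae ⟨hS, Set.insert_subset haS hTS, hcard'⟩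

theorem encard_minimalHittingExtensions_le (hd : 1 ≤ d) (h𝓔 : ∀ e ∈ 𝓔, e.encard ≤ d)
    (T : Set V) (k : ℕ) : (minimalHittingExtensions 𝓔 T k).encard ≤ d ^ k := by
  induction k generalizing T with
  | zero =>
    rw [pow_zero, ← Set.encard_singleton T]
    exact Set.encard_le_encard minimalHittingExtensions_zero_subset_singleton
  | succ k ih =>
    by_cases hT : IsHittingSet 𝓔 T
    · calc (minimalHittingExtensions 𝓔 T (k + 1)).encard
          ≤ ({T} : Set (Set V)).encard :=
            Set.encard_le_encard (minimalHittingExtensions_subset_singleton_of_isHittingSet hT)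
        _ = 1 := Set.encard_singleton T
        _ ≤ d ^ (k + 1) := one_le_pow₀ hd
    · obtain ⟨e, he, heT⟩ : ∃ e ∈ 𝓔, Disjoint e T := by
        simpa [IsHittingSet, Set.not_nonempty_iff_eq_empty, Set.disjoint_iff_inter_eq_empty]
          using hT
      calc (minimalHittingExtensions 𝓔 T (k + 1)).encard
          ≤ (⋃ a ∈ e, minimalHittingExtensions 𝓔 (insert a T) k).encard :=
            Set.encard_le_encard (minimalHittingExtensions_succ_subset_biUnion he heT)
        _ ≤ e.encard * d ^ k := encard_biUnion_le_encard_mul fun a _ ↦ ih (insert a T)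
        _ ≤ d * d ^ k := mul_le_mul_left (h𝓔 e he) _
        _ = d ^ (k + 1) := (pow_succ' d k).symm

theorem encard_minimal_isHittingSet_le (hd : 1 ≤ d) (h𝓔 : ∀ e ∈ 𝓔, e.encard ≤ d) (k : ℕ) :
    {S | Minimal (IsHittingSet 𝓔) S ∧ S.encard ≤ k}.encard ≤ d ^ k := by
  simpa [minimalHittingExtensions] using encard_minimalHittingExtensions_le hd h𝓔 ∅ k

end HittingSet

theorem isVCover_iff_isHittingSet {V : Type*} {G : SimpleGraph V} {S : Set V} :
    IsVCover G S ↔ IsHittingSet ((↑) '' G.edgeSet) S := by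
  rw [IsHittingSet, Set.forall_mem_image]
  simp [IsVCover, Sym2.forall, Set.Nonempty]

theorem statement_10_general {V : Type*} (G : SimpleGraph V) (k : ℕ) :
    {S : Set V | Minimal (IsVCover G) S ∧ S.encard ≤ k}.encard ≤ 2 ^ k := by
  have hedge : ∀ e ∈ ((↑) '' G.edgeSet : Set (Set V)), e.encard ≤ 2 := by
    rintro _ ⟨⟨a, b⟩, -, rfl⟩
    simpa [one_add_one_eq_two] using Set.encard_insert_le {b} a
  have hcover : IsVCover G = IsHittingSet ((↑) '' G.edgeSet) :=
    funext fun _ ↦ propext isVCover_iff_isHittingSet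
  rw [hcover]
  exact encard_minimal_isHittingSet_le one_le_two hedge k

/-- every finite undirected graph has at most `2 ^ k` inclusion-minimal vertex
covers of size at most `k`. -/
theorem statement_10 {V : Type*} [Fintype V] (G : SimpleGraph V) (k : ℕ) :
    {S : Set V | (IsVCover G S ∧ ∀ S' ⊂ S, ¬ IsVCover G S') ∧ S.ncard ≤ k}.ncard ≤ 2 ^ k := by
  rw [← Nat.cast_le (α := ℕ∞), (Set.toFinite _).cast_ncard_eq]
  simpa [Set.minimal_iff_forall_ssubset, Set.encard_le_coe_iff_finite_ncard_le, Set.toFinite]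
    using statement_10_general G k
end

section
/- Let q ≥ 2 and let H^1, …, H^q be strongly connected tournaments on pairwise disjoint vertex sets, each with at least 3 vertices. Let D be the tournament whose vertex set is the union of the V(H^m) and whose arc set consists of all arcs of the H^m together with the arc uv for every u ∈ V(H^i), v ∈ V(H^j) with i < j. Let i < j, u ∈ V(H^i), v ∈ V(H^j), and let D' be the tournament obtained from D by replacing the arc uv with the arc vu. Then all vertices of V(H^i) ∪ V(H^{i+1}) ∪ ⋯ ∪ V(H^j) lie in a single strongly connected component of D'. -/
open Set

/-- A (loopless) digraph given by its arc relation `A` is *semicomplete* if between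
any two distinct vertices there is at least one arc. -/
def Semicomplete {V : Type*} (A : V → V → Prop) : Prop :=
  Irreflexive A ∧ ∀ x y : V, x ≠ y → A x y ∨ A y x

/-- Reachability (by a directed path) inside the subdigraph induced on the vertex set `W`. -/
def DReach {V : Type*} (A : V → V → Prop) (W : Set V) : V → V → Prop :=
  Relation.ReflTransGen fun a b => a ∈ W ∧ b ∈ W ∧ A a b

/-- The vertex set of the strongly connected component of `v` in the
subdigraph induced on the vertex set `W`. -/
def dscc {V : Type*} (A : V → V → Prop) (W : Set V) (v : V) : Set V :=
  {u | u ∈ W ∧ DReach A W v u ∧ DReach A W u v}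

/-- `C` is the vertex set of a strongly connected component of the subdigraph induced on `W`. -/
def IsSccSet {V : Type*} (A : V → V → Prop) (W : Set V) (C : Set V) : Prop :=
  ∃ v ∈ W, C = dscc A W v

/-- `mco`: the maximum number of vertices in a strongly connected component of the
subdigraph induced on `W`. -/
noncomputable def mco {V : Type*} (A : V → V → Prop) (W : Set V) : ℕ :=
  sSup {n | ∃ v ∈ W, n = (dscc A W v).ncard}

/-- Out-degree of `v`. -/
noncomputable def outDeg {V : Type*} (A : V → V → Prop) (v : V) : ℕ := {u | A v u}.ncard

/-- In-degree of `v`. -/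
noncomputable def inDeg {V : Type*} (A : V → V → Prop) (v : V) : ℕ := {u | A u v}.ncard

/-- `S` covers all arcs from `Z` to `Y`. -/
def ArcCover {V : Type*} (A : V → V → Prop) (Y Z S : Set V) : Prop :=
  ∀ y ∈ Y, ∀ z ∈ Z, A z y → y ∈ S ∨ z ∈ S

/-- A triple `(Y,Z,S)` is `t`-valid (with respect to the digraph `A` and parameter `k`). -/
def TValid {V : Type*} [Fintype V] (A : V → V → Prop) (k t : ℕ) (Y Z S : Set V) : Prop :=
  Y ∪ Z = Set.univ ∧ Disjoint Y Z ∧ Y.ncard = t ∧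
  ArcCover A Y Z S ∧ (∀ S' ⊆ S, ArcCover A Y Z S' → S' = S) ∧
  S.ncard ≤ k ∧
  (∀ x ∈ S, Fintype.card V - t + k < outDeg A x → x ∈ Y) ∧
  (∀ x ∈ S, t + k < inDeg A x → x ∈ Z)

/-- The weight `w((Y1,Z1,S1),(Y2,Z2,S2)) = |S1 \ S2| + max (0, |(Z1 ∩ Y2) \ (S1 ∪ S2)| - ℓ)`. -/
noncomputable def wt {V : Type*} (ℓ : ℕ) (Z1 S1 Y2 S2 : Set V) : ℕ :=
  (S1 \ S2).ncard + (((Z1 ∩ Y2) \ (S1 ∪ S2)).ncard - ℓ)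

/-- Compatibility of a pair of valid triples. -/
def Compat {V : Type*} (ℓ k : ℕ) (Y1 Z1 S1 Y2 Z2 S2 : Set V) : Prop :=
  Y1 ⊂ Y2 ∧ (∀ x ∈ S1 ∩ Z1, x ∈ Z2 → x ∈ S2) ∧ (Y1 \ S1 ⊆ Y2 \ S2) ∧
  wt ℓ Z1 S1 Y2 S2 ≤ k

/-!
Without using the arc `uv`, every vertex of `V(H^i) ∪ ⋯ ∪ V(H^j)` other than `v` can be reached from
`u`, and every one other than `u` can reach `v`. A third vertex `w` therefore provides a detour from
`u` to `v`, and the new arc `vu` leads back from `v` to `u`.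
-/

section DReach

variable {V : Type*} {A B : V → V → Prop} {S T : Set V} {u v x y : V}

theorem DReach.mono (hST : S ⊆ T) (hAB : ∀ a ∈ S, ∀ b ∈ S, A a b → B a b)
    (h : DReach A S x y) : DReach B T x y :=
  Relation.ReflTransGen.mono
    (fun a b ⟨ha, hb, hab⟩ => ⟨hST ha, hST hb, hAB a ha b hb hab⟩) x y h

theorem DReach.single (hx : x ∈ S) (hy : y ∈ S) (hxy : A x y) : DReach A S x y :=
  Relation.ReflTransGen.single ⟨hx, hy, hxy⟩

theorem subset_dscc_of_dreach_of_ne (hTS : T ⊆ S) (hvu : DReach A S v u)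
    (hfrom : ∀ x ∈ T, x ≠ v → DReach A S u x) (hto : ∀ x ∈ T, x ≠ u → DReach A S x v)
    (hw : ∃ w ∈ T, w ≠ u ∧ w ≠ v) : T ⊆ dscc A S u := by
  obtain ⟨w, hwT, hwu, hwv⟩ := hw
  have huv : DReach A S u v := (hfrom w hwT hwv).trans (hto w hwT hwu)
  intro x hx
  refine ⟨hTS hx, ?_, ?_⟩
  · rcases eq_or_ne x v with rfl | hxv
    · exact huv
    · exact hfrom x hx hxv
  · rcases eq_or_ne x u with rfl | hxu
    · exact .refl
    · exact (hto x hx hxu).trans hvu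

end DReach

/-- The digraph obtained from `A` by replacing the arc `uv` with the arc `vu`, the passage from
`D` to `D'`. The arc `vu` is added even if `uv` is not an arc of `A`. -/
def reverseArc {V : Type*} (A : V → V → Prop) (u v : V) : V → V → Prop :=
  fun a b => (A a b ∧ ¬(a = u ∧ b = v)) ∨ (a = v ∧ b = u)

section reverseArc

variable {V : Type*} {A : V → V → Prop} {u v x y : V}

theorem reverseArc_of_ne (hxy : A x y) (hne : ¬(x = u ∧ y = v)) : reverseArc A u v x y :=
  .inl ⟨hxy, hne⟩

theorem reverseArc_swap (A : V → V → Prop) (u v : V) : reverseArc A u v v u :=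
  .inr ⟨rfl, rfl⟩

theorem DReach.reverseArc_of_notMem {S T : Set V} (hST : S ⊆ T) (huv : u ∈ S → v ∉ S)
    (h : DReach A S x y) : DReach (reverseArc A u v) T x y := by
  refine h.mono hST fun a ha b hb hab => reverseArc_of_ne hab ?_
  rintro ⟨rfl, rfl⟩
  exact huv ha hb

theorem dreach_reverseArc_of_le {ι : Type*} [PartialOrder ι] {W : ι → Set V} {m n : ι}
    (hstrong : ∀ m, ∀ x ∈ W m, ∀ y ∈ W m, DReach A (W m) x y)
    (harc : ∀ m n, m < n → ∀ x ∈ W m, ∀ y ∈ W n, A x y)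
    (huv : ∀ m, u ∈ W m → v ∉ W m) (hmn : m ≤ n) (hx : x ∈ W m) (hy : y ∈ W n)
    (hne : ¬(x = u ∧ y = v)) : DReach (reverseArc A u v) (⋃ m, W m) x y := by
  rcases hmn.eq_or_lt with rfl | hlt
  · exact (hstrong m x hx y hy).reverseArc_of_notMem (subset_iUnion W m) (huv m)
  · exact .single (mem_iUnion_of_mem m hx) (mem_iUnion_of_mem n hy)
      (reverseArc_of_ne (harc m n hlt x hx y hy) hne)

end reverseArc

theorem exists_ne_ne_of_two_lt_ncard {α : Type*} {S : Set α} (hS : 2 < S.ncard) (a b : α) :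
    ∃ w ∈ S, w ≠ a ∧ w ≠ b := by
  obtain ⟨w, hwS, hw⟩ : ∃ w ∈ S, w ∉ ({a, b} : Set α) :=
    exists_mem_notMem_of_ncard_lt_ncard ((ncard_insert_le a {b}).trans_lt (by simpa using hS))
  exact ⟨w, hwS, not_or.mp hw⟩

theorem statement_18_general {V ι : Type*} [PartialOrder ι] (W : ι → Set V)
    (hdisj : Pairwise (Function.onFun Disjoint W)) (A : V → V → Prop)
    (hstrong : ∀ m, ∀ x ∈ W m, ∀ y ∈ W m, DReach A (W m) x y)
    (harc : ∀ m n, m < n → ∀ x ∈ W m, ∀ y ∈ W n, A x y)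
    (i j : ι) (hij : i < j) (u : V) (hu : u ∈ W i) (v : V) (hv : v ∈ W j)
    (hw : ∃ w ∈ ⋃ (m : ι) (_ : i ≤ m) (_ : m ≤ j), W m, w ≠ u ∧ w ≠ v) :
    ∃ C : Set V, IsSccSet (reverseArc A u v) (⋃ m, W m) C ∧
      (⋃ (m : ι) (_ : i ≤ m) (_ : m ≤ j), W m) ⊆ C := by
  have huv : ∀ m, u ∈ W m → v ∉ W m := by
    intro m hum hvm
    have him : i = m := hdisj.eq (not_disjoint_iff.mpr ⟨u, hu, hum⟩)
    have hjm : j = m := hdisj.eq (not_disjoint_iff.mpr ⟨v, hv, hvm⟩)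
    exact hij.ne (him.trans hjm.symm)
  have hu' : u ∈ ⋃ m, W m := mem_iUnion_of_mem i hu
  have hv' : v ∈ ⋃ m, W m := mem_iUnion_of_mem j hv
  have hsub : (⋃ (m : ι) (_ : i ≤ m) (_ : m ≤ j), W m) ⊆ ⋃ m, W m :=
    iUnion_mono fun m => iUnion₂_subset fun _ _ => subset_rfl
  have hvu : DReach (reverseArc A u v) (⋃ m, W m) v u :=
    .single hv' hu' (reverseArc_swap A u v)
  refine ⟨_, ⟨u, hu', rfl⟩, subset_dscc_of_dreach_of_ne hsub hvu ?_ ?_ hw⟩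
  · intro x hx hxv
    obtain ⟨m, him, -, hxm⟩ : ∃ m, i ≤ m ∧ m ≤ j ∧ x ∈ W m := by
      simpa only [mem_iUnion, exists_prop] using hx
    exact dreach_reverseArc_of_le hstrong harc huv him hu hxm fun h => hxv h.2
  · intro x hx hxu
    obtain ⟨m, -, hmj, hxm⟩ : ∃ m, i ≤ m ∧ m ≤ j ∧ x ∈ W m := by
      simpa only [mem_iUnion, exists_prop] using hx
    exact dreach_reverseArc_of_le hstrong harc huv hmj hxm hv fun h => hxu h.1

/-- let `H^1, …, H^q` (`q ≥ 2`) be strongly connected tournaments on pairwise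
disjoint vertex sets, each with at least `3` vertices, and let `D` consist of the `H^m`
together with all arcs from `H^m` to `H^{m'}` for `m < m'`. If `D'` is obtained from `D` by
reversing an arc `uv` with `u ∈ V(H^i)`, `v ∈ V(H^j)`, `i < j`, then all vertices of
`V(H^i) ∪ ⋯ ∪ V(H^j)` lie in a single strong component of `D'`. -/
theorem statement_18 {V : Type*} [Fintype V] (q : ℕ) (hq : 2 ≤ q)
    (W : Fin q → Set V) (hdisj : ∀ m m' : Fin q, m ≠ m' → Disjoint (W m) (W m'))
    (H : Fin q → V → V → Prop)
    (hsupp : ∀ m : Fin q, ∀ u v : V, H m u v → u ∈ W m ∧ v ∈ W m)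
    (hirr : ∀ m : Fin q, Irreflexive (H m))
    (htour : ∀ m : Fin q, ∀ u ∈ W m, ∀ v ∈ W m, u ≠ v → (H m u v ↔ ¬ H m v u))
    (hstrong : ∀ m : Fin q, ∀ u ∈ W m, ∀ v ∈ W m, DReach (H m) (W m) u v)
    (hsize : ∀ m : Fin q, 3 ≤ (W m).ncard)
    (i j : Fin q) (hij : i < j) (u : V) (hu : u ∈ W i) (v : V) (hv : v ∈ W j) :
    ∃ C : Set V,
      IsSccSet
        (fun a b =>
          (((∃ m, H m a b) ∨ ∃ m m' : Fin q, m < m' ∧ a ∈ W m ∧ b ∈ W m') ∧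
            ¬(a = u ∧ b = v)) ∨ (a = v ∧ b = u))
        (⋃ m, W m) C ∧
      (⋃ (m : Fin q) (_ : i ≤ m) (_ : m ≤ j), W m) ⊆ C := by
  obtain ⟨w, hw, hne⟩ := exists_ne_ne_of_two_lt_ncard (hsize i) u v
  exact statement_18_general W (fun m n => hdisj m n) _
    (fun m x hx y hy => (hstrong m x hx y hy).mono subset_rfl fun _ _ _ _ h => .inl ⟨m, h⟩)
    (fun m n hmn x hx y hy => .inr ⟨m, n, hmn, hx, hy⟩)
    i j hij u hu v hv ⟨w, mem_iUnion₂_of_mem le_rfl (mem_iUnion_of_mem hij.le hw), hne⟩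
end
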